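/- Let A be a finite index set and for each k ∈ {1,…,N} and a ∈ A let G_k^a be an operator on H_k; set G^a = Σ_{k=1}^N (extension of G_k^a to H) and D_k² = ‖Σ_{a∈A} (G_k^a)† G_k^a‖_∞. Then for every density matrix ρ on H, Σ_{a∈A} Var_ρ(G^a) ≤ ((1/N)·Σ_{k=1}^N D_k²) · (N + 2N²·√((1/N)·Σ_{k=1}^N s_k)). -/

import Mathlib

open scoped BigOperators Kronecker Matrix ComplexOrder

noncomputable section
namespace Paper

/-- A density matrix: a positive semidefinite operator of trace one. -/
def IsDensityMatrix {n : Type*} [Fintype n] (ρ : Matrix n n ℂ) : Prop :=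
  ρ.PosSemidef ∧ ρ.trace = 1

/-- The operator norm `‖A‖_∞` (largest singular value) of a matrix,
as the operator norm of the induced map on Euclidean space. -/
noncomputable def opNorm {n : Type*} [Fintype n] [DecidableEq n] (A : Matrix n n ℂ) : ℝ :=
  ‖LinearMap.toContinuousLinearMap (Matrix.toEuclideanLin A)‖

/-- Von Neumann entropy `−∑ λ ln λ` over the eigenvalues; since `Real.log 0 = 0`
in Mathlib, the convention `0 · ln 0 = 0` is automatic. -/
noncomputable def entropy {n : Type*} [Fintype n] [DecidableEq n] (σ : Matrix n n ℂ) : ℝ :=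
  if h : σ.IsHermitian then -∑ i, h.eigenvalues i * Real.log (h.eigenvalues i) else 0

/-- The variance `Var_ρ(A) = Tr[ρ A† A] − |Tr[ρ A]|²`. -/
noncomputable def variance {n : Type*} [Fintype n] (ρ A : Matrix n n ℂ) : ℝ :=
  (ρ * (Aᴴ * A)).trace.re - ‖(ρ * A).trace‖ ^ 2

/-- The trace norm `‖A‖₁ = Tr √(A†A)`: the sum of the singular values. -/
noncomputable def traceNorm {n : Type*} [Fintype n] [DecidableEq n] (A : Matrix n n ℂ) : ℝ :=
  ∑ i, Real.sqrt ((Matrix.posSemidef_conjTranspose_mul_self A).1.eigenvalues i)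

/-- The pure state `|v⟩⟨v|` associated with a vector `v`. -/
def pureState {n : Type*} (v : n → ℂ) : Matrix n n ℂ :=
  Matrix.of fun x y => v x * (starRingEnd ℂ) (v y)

/-- The expectation value `⟨v|M|v⟩`. -/
noncomputable def expval {n : Type*} [Fintype n] (M : Matrix n n ℂ) (v : n → ℂ) : ℂ :=
  ∑ x, ∑ y, (starRingEnd ℂ) (v x) * M x y * v y

variable {N : ℕ} {d : Fin N → Type*} [∀ k, Fintype (d k)] [∀ k, DecidableEq (d k)]

/-- Extension of a local operator on the `k`-th factor to the `N`-fold tensor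
product `H = H_1 ⊗ ⋯ ⊗ H_N`, tensoring with the identity on every other factor.
(The tensor product is realized with index set `∀ j, d j`.) -/
def extendAt (k : Fin N) (A : Matrix (d k) (d k) ℂ) : Matrix (∀ j, d j) (∀ j, d j) ℂ :=
  Matrix.of fun x y => if ∀ j, j ≠ k → x j = y j then A (x k) (y k) else 0

/-- Reduced density matrix on the `k`-th factor: partial trace over all other factors. -/
noncomputable def reduce (k : Fin N) (ρ : Matrix (∀ j, d j) (∀ j, d j) ℂ) :
    Matrix (d k) (d k) ℂ :=
  Matrix.of fun a b => ∑ x : ∀ j, d j, if x k = a then ρ x (Function.update x k b) else 0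

set_option linter.unusedSectionVars false

section Positivity

variable {n ι : Type*} [Fintype n] [DecidableEq n] [Fintype ι]

open scoped MatrixOrder Matrix.Norms.L2Operator in
theorem exists_eq_conjTranspose_mul_self {A : Matrix n n ℂ} (hA : A.PosSemidef) :
    ∃ B : Matrix n n ℂ, A = Bᴴ * B :=
  CStarAlgebra.nonneg_iff_eq_star_mul_self.1 hA.nonneg

open scoped MatrixOrder Matrix.Norms.L2Operator in
theorem posSemidef_opNorm_smul_one_sub {S : Matrix n n ℂ} (hS : S.IsHermitian) :
    ((opNorm S : ℂ) • (1 : Matrix n n ℂ) - S).PosSemidef := by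
  have h : S ≤ algebraMap ℝ _ ‖S‖ := IsSelfAdjoint.le_algebraMap_norm_self (a := S) hS
  rw [Matrix.le_iff, Algebra.algebraMap_eq_smul_one] at h
  exact h

theorem opNorm_nonneg (S : Matrix n n ℂ) : 0 ≤ opNorm S := norm_nonneg _

theorem trace_mul_nonneg {ρ K : Matrix n n ℂ} (hρ : ρ.PosSemidef) (hK : K.PosSemidef) :
    0 ≤ (ρ * K).trace := by
  obtain ⟨R, rfl⟩ := exists_eq_conjTranspose_mul_self hρ
  rw [Matrix.mul_assoc, Matrix.trace_mul_comm]
  exact (hK.mul_mul_conjTranspose_same R).trace_nonneg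

/-- Cauchy-Schwarz for the form `(X, Y) ↦ ∑ a, Tr[ρ X_a† Y_a]`. -/
theorem norm_sum_trace_le {ρ : Matrix n n ℂ} (hρ : ρ.PosSemidef) (X Y : ι → Matrix n n ℂ) :
    ‖∑ a, (ρ * ((X a)ᴴ * Y a)).trace‖ ≤
      √(∑ a, (ρ * ((X a)ᴴ * X a)).trace.re) * √(∑ a, (ρ * ((Y a)ᴴ * Y a)).trace.re) := by
  obtain ⟨R, hR⟩ := exists_eq_conjTranspose_mul_self hρ
  let v (Z : ι → Matrix n n ℂ) : EuclideanSpace ℂ (ι × n × n) :=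
    WithLp.toLp 2 fun t => (Z t.1 * Rᴴ) t.2.1 t.2.2
  have key (Z W : ι → Matrix n n ℂ) :
      ∑ a, (ρ * ((Z a)ᴴ * W a)).trace = inner ℂ (v Z) (v W) := by
    have h (a : ι) : (ρ * ((Z a)ᴴ * W a)).trace = ((Z a * Rᴴ)ᴴ * (W a * Rᴴ)).trace := by
      rw [hR, Matrix.mul_assoc, Matrix.trace_mul_comm]
      simp [Matrix.mul_assoc]
    simp only [h, PiLp.inner_apply, v, Fintype.sum_prod_type]
    refine Finset.sum_congr rfl fun a _ => ?_
    rw [Finset.sum_comm]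
    simp [Matrix.trace, Matrix.mul_apply, mul_comm]
  have hn (Z : ι → Matrix n n ℂ) :
      √(∑ a, (ρ * ((Z a)ᴴ * Z a)).trace.re) = ‖v Z‖ := by
    rw [← Complex.re_sum, key, inner_self_eq_norm_sq_to_K]
    norm_cast
    exact Real.sqrt_sq (norm_nonneg _)
  rw [key, hn, hn]
  exact norm_inner_le_norm _ _

theorem norm_sum_trace_le_of_le {ρ : Matrix n n ℂ} (hρ : ρ.PosSemidef) {X Y : ι → Matrix n n ℂ}
    {s t : ℝ} (hX : ∑ a, (ρ * ((X a)ᴴ * X a)).trace.re ≤ s)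
    (hY : ∑ a, (ρ * ((Y a)ᴴ * Y a)).trace.re ≤ t) :
    ‖∑ a, (ρ * ((X a)ᴴ * Y a)).trace‖ ≤ √s * √t :=
  (norm_sum_trace_le hρ X Y).trans <|
    mul_le_mul (Real.sqrt_le_sqrt hX) (Real.sqrt_le_sqrt hY) (Real.sqrt_nonneg _)
      (Real.sqrt_nonneg _)

/-- If `∑ a, X_a† X_a ≤ D`, then `∑ a, Tr[ρ (X_a M)† X_a M] ≤ D Tr[ρ M† M]`. -/
theorem sum_trace_mul_le {ρ : Matrix n n ℂ} (hρ : ρ.PosSemidef) {X : ι → Matrix n n ℂ} {D : ℝ}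
    (hX : ((D : ℂ) • (1 : Matrix n n ℂ) - ∑ a, (X a)ᴴ * X a).PosSemidef) (M : Matrix n n ℂ) :
    ∑ a, (ρ * ((X a * M)ᴴ * (X a * M))).trace.re ≤ D * (ρ * (Mᴴ * M)).trace.re := by
  have h := trace_mul_nonneg hρ (hX.conjTranspose_mul_mul_same M)
  have h2 : (ρ * (Mᴴ * ((D : ℂ) • (1 : Matrix n n ℂ) - ∑ a, (X a)ᴴ * X a) * M)).trace =
      D * (ρ * (Mᴴ * M)).trace - ∑ a, (ρ * ((X a * M)ᴴ * (X a * M))).trace := by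
    simp [Matrix.mul_sub, Matrix.sub_mul, Matrix.mul_sum, Matrix.sum_mul, Matrix.trace_sum,
      Matrix.mul_assoc]
  rw [h2, Complex.le_def] at h
  simpa [Complex.re_sum] using h.1

end Positivity

section Extension

theorem extendAt_mul_apply (k : Fin N) (A : Matrix (d k) (d k) ℂ)
    (M : Matrix (∀ j, d j) (∀ j, d j) ℂ) (x y : ∀ j, d j) :
    (extendAt k A * M) x y = ∑ b, A (x k) b * M (Function.update x k b) y := by
  rw [Matrix.mul_apply]
  symm
  refine Finset.sum_of_injOn (fun b => Function.update x k b) ?_ ?_ ?_ ?_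
  · intro b _ c _ h
    simpa using congrFun h k
  · intro b _
    simp
  · intro z _ hz
    have : ¬ ∀ j, j ≠ k → x j = z j := by
      intro h
      refine hz ⟨z k, by simp, ?_⟩
      funext j
      by_cases hj : j = k
      · subst hj; simp
      · simp [hj, h j hj]
    simp [extendAt, this]
  · intro b _
    have : ∀ j, j ≠ k → x j = Function.update x k b j := by
      intro j hj; simp [hj]
    simp only [extendAt, Matrix.of_apply, if_pos this, Function.update_self]

theorem extendAt_mul (k : Fin N) (A B : Matrix (d k) (d k) ℂ) :
    extendAt k A * extendAt k B = extendAt k (A * B) := by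
  ext x y
  rw [extendAt_mul_apply]
  have h : ∀ b, (∀ j, j ≠ k → Function.update x k b j = y j) ↔ ∀ j, j ≠ k → x j = y j := by
    intro b
    refine forall_congr' fun j => forall_congr' fun hj => ?_
    rw [Function.update_of_ne hj]
  simp only [extendAt, Matrix.of_apply, h, Function.update_self, Matrix.mul_apply]
  split_ifs <;> simp

theorem extendAt_one (k : Fin N) :
    extendAt k (1 : Matrix (d k) (d k) ℂ) = 1 := by
  ext x y
  simp only [extendAt, Matrix.of_apply, Matrix.one_apply]
  by_cases h : x = y
  · simp [h]
  · rw [if_neg h]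
    split_ifs with h1 h2
    · refine absurd (funext fun j => ?_) h
      by_cases hj : j = k
      · subst hj; exact h2
      · exact h1 j hj
    · rfl
    · rfl

theorem extendAt_conjTranspose (k : Fin N) (A : Matrix (d k) (d k) ℂ) :
    (extendAt k A)ᴴ = extendAt k Aᴴ := by
  ext x y
  simp only [extendAt, Matrix.of_apply, Matrix.conjTranspose_apply, eq_comm (a := x _)]
  split_ifs <;> simp

theorem extendAt_sub (k : Fin N) (A B : Matrix (d k) (d k) ℂ) :
    extendAt k (A - B) = extendAt k A - extendAt k B := by
  ext x y
  simp only [extendAt, Matrix.of_apply, Matrix.sub_apply]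
  split_ifs <;> simp

theorem extendAt_smul (k : Fin N) (c : ℂ) (A : Matrix (d k) (d k) ℂ) :
    extendAt k (c • A) = c • extendAt k A := by
  ext x y
  simp only [extendAt, Matrix.of_apply, Matrix.smul_apply]
  split_ifs <;> simp

theorem extendAt_sum {ι : Type*} (s : Finset ι) (k : Fin N) (A : ι → Matrix (d k) (d k) ℂ) :
    extendAt k (∑ i ∈ s, A i) = ∑ i ∈ s, extendAt k (A i) := by
  ext x y
  simp only [extendAt, Matrix.of_apply, Matrix.sum_apply]
  split_ifs <;> simp

theorem commute_extendAt {k l : Fin N} (hkl : k ≠ l) (A : Matrix (d k) (d k) ℂ)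
    (B : Matrix (d l) (d l) ℂ) : Commute (extendAt k A) (extendAt l B) := by
  have key : extendAt k A * (extendAt l B * 1) = extendAt l B * (extendAt k A * 1) := by
    ext x y
    simp only [extendAt_mul_apply, Finset.mul_sum]
    rw [Finset.sum_comm]
    refine Finset.sum_congr rfl fun c _ => Finset.sum_congr rfl fun b _ => ?_
    rw [Function.update_of_ne hkl.symm, Function.update_of_ne hkl, Function.update_comm hkl]
    ring
  rwa [mul_one, mul_one] at key

theorem mul_extendAt_apply (k : Fin N) (A : Matrix (d k) (d k) ℂ)
    (M : Matrix (∀ j, d j) (∀ j, d j) ℂ) (x y : ∀ j, d j) :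
    (M * extendAt k A) x y = ∑ b, M x (Function.update y k b) * A b (y k) := by
  have h : M * extendAt k A = (extendAt k Aᴴ * Mᴴ)ᴴ := by
    rw [Matrix.conjTranspose_mul, ← extendAt_conjTranspose]
    simp
  rw [h, Matrix.conjTranspose_apply, extendAt_mul_apply, star_sum]
  simp [mul_comm]

theorem trace_mul_extendAt (k : Fin N) (ρ : Matrix (∀ j, d j) (∀ j, d j) ℂ)
    (A : Matrix (d k) (d k) ℂ) :
    (ρ * extendAt k A).trace = (reduce k ρ * A).trace := by
  simp only [Matrix.trace, Matrix.diag_apply, mul_extendAt_apply]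
  simp only [Matrix.mul_apply, reduce, Matrix.of_apply, Finset.sum_mul, ite_mul, zero_mul]
  rw [Finset.sum_comm]
  symm
  rw [Finset.sum_comm]
  refine Finset.sum_congr rfl fun b _ => ?_
  rw [Finset.sum_comm]
  simp

theorem extendAt_posSemidef (k : Fin N) {A : Matrix (d k) (d k) ℂ} (hA : A.PosSemidef) :
    (extendAt k A).PosSemidef := by
  obtain ⟨B, rfl⟩ := exists_eq_conjTranspose_mul_self hA
  rw [← extendAt_mul, ← extendAt_conjTranspose]
  exact Matrix.posSemidef_conjTranspose_mul_self _

end Extension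

section Spectral

theorem negMulLog_sum_lower_bound {ι : Type*} [Fintype ι] {q : ι → ℝ} (hq : ∀ i, 0 ≤ q i)
    (hsum : ∑ i, q i = 1) {i₀ : ι} (hmax : ∀ i, q i ≤ q i₀) :
    1 / 4 ≤ ∑ i, Real.negMulLog (q i) ∨ 9 / 4 * (1 - q i₀) ≤ ∑ i, Real.negMulLog (q i) := by
  classical
  have hsplit : q i₀ + ∑ i ∈ Finset.univ.erase i₀, q i = 1 := by
    rw [Finset.add_sum_erase _ _ (Finset.mem_univ i₀), hsum]
  have hle (i : ι) (hi : i ≠ i₀) : q i ≤ 1 - q i₀ := by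
    have := Finset.single_le_sum (f := q) (s := Finset.univ.erase i₀) (fun j _ => hq j)
      (Finset.mem_erase.2 ⟨hi, Finset.mem_univ i⟩)
    linarith
  have hle_one : q i₀ ≤ 1 := by
    have := Finset.sum_nonneg (s := Finset.univ.erase i₀) fun i _ => hq i
    linarith
  have hbase (i : ι) : q i * (1 - q i) ≤ Real.negMulLog (q i) := by
    rcases (hq i).eq_or_lt with h | h
    · simp [← h]
    · have := Real.log_le_sub_one_of_pos h
      unfold Real.negMulLog
      nlinarith
  have hgen (t : ℝ) (ht : 0 < t) (hε : 1 - q i₀ ≤ t⁻¹) :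
      (1 - q i₀) * (q i₀ + Real.log t) ≤ ∑ i, Real.negMulLog (q i) := by
    rw [← Finset.add_sum_erase _ _ (Finset.mem_univ i₀)]
    have h2 : ∑ i ∈ Finset.univ.erase i₀, q i * Real.log t ≤
        ∑ i ∈ Finset.univ.erase i₀, Real.negMulLog (q i) := by
      refine Finset.sum_le_sum fun i hi => ?_
      rcases (hq i).eq_or_lt with h | h
      · simp [← h]
      · have h3 : Real.log (q i) ≤ Real.log t⁻¹ :=
          Real.log_le_log h ((hle i (Finset.ne_of_mem_erase hi)).trans hε)
        rw [Real.log_inv] at h3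
        unfold Real.negMulLog
        nlinarith
    rw [← Finset.sum_mul] at h2
    have h3 : ∑ i ∈ Finset.univ.erase i₀, q i = 1 - q i₀ := by linarith
    rw [h3] at h2
    have := hbase i₀
    nlinarith
  have hlog2 := Real.log_two_gt_d9
  by_cases h8 : 1 - q i₀ ≤ 8⁻¹
  · right
    have h := hgen 8 (by norm_num) h8
    rw [show (8 : ℝ) = 2 ^ 3 by norm_num, Real.log_pow] at h
    norm_num at h h8
    nlinarith
  left
  push Not at h8
  by_cases h4 : 1 - q i₀ ≤ 4⁻¹
  · have h := hgen 4 (by norm_num) h4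
    rw [show (4 : ℝ) = 2 ^ 2 by norm_num, Real.log_pow] at h
    norm_num at h h4 h8
    nlinarith
  · push Not at h4
    have h : 1 - q i₀ ≤ ∑ i, Real.negMulLog (q i) := by
      calc 1 - q i₀ = ∑ i, q i * (1 - q i₀) := by rw [← Finset.sum_mul, hsum, one_mul]
        _ ≤ ∑ i, q i * (1 - q i) :=
          Finset.sum_le_sum fun i _ => mul_le_mul_of_nonneg_left (by linarith [hmax i]) (hq i)
        _ ≤ _ := Finset.sum_le_sum fun i _ => hbase i
    norm_num at h4
    linarith

/-- The projection onto an eigenvector for the largest eigenvalue of a density matrix. -/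
theorem IsDensityMatrix.exists_projection {n : Type*} [Fintype n] [DecidableEq n] [Nonempty n]
    {σ : Matrix n n ℂ} (hσ : IsDensityMatrix σ) :
    ∃ P : Matrix n n ℂ, IsDensityMatrix P ∧ P * P = P ∧ P * σ = σ * P ∧
      (∀ X, P * X * P = (P * X).trace • P) ∧
      (1 / 4 ≤ entropy σ ∨ 9 / 4 * (σ * (1 - P)).trace.re ≤ entropy σ) := by
  have hH := hσ.1.1
  obtain ⟨i₀, hmax⟩ := Finite.exists_max hH.eigenvalues
  set ψ : n → ℂ := (hH.eigenvectorBasis i₀).ofLp with hψ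
  have hunit : star ψ ⬝ᵥ ψ = 1 := by
    have h := hH.eigenvectorBasis.orthonormal.1 i₀
    have h2 := inner_self_eq_norm_sq_to_K (𝕜 := ℂ) (hH.eigenvectorBasis i₀)
    rw [h, EuclideanSpace.inner_eq_star_dotProduct, dotProduct_comm] at h2
    simpa using h2
  have heig : σ *ᵥ ψ = (hH.eigenvalues i₀ : ℂ) • ψ := by
    rw [hψ, hH.mulVec_eigenvectorBasis]
    rfl
  have hP := Matrix.posSemidef_vecMulVec_self_star ψ
  have hσP : σ * Matrix.vecMulVec ψ (star ψ) =
      (hH.eigenvalues i₀ : ℂ) • Matrix.vecMulVec ψ (star ψ) := by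
    rw [Matrix.mul_vecMulVec, heig, Matrix.smul_vecMulVec]
  have htr : (Matrix.vecMulVec ψ (star ψ)).trace = 1 := by
    rw [Matrix.trace_vecMulVec, dotProduct_comm, hunit]
  refine ⟨Matrix.vecMulVec ψ (star ψ), ⟨hP, htr⟩, ?_, ?_, ?_, ?_⟩
  · rw [Matrix.vecMulVec_mul_vecMulVec, hunit, one_smul]
  · have h := congrArg Matrix.conjTranspose hσP
    rw [Matrix.conjTranspose_mul, Matrix.conjTranspose_smul, hP.1, hH] at h
    rw [h, hσP]
    simp
  · intro X
    rw [Matrix.vecMulVec_mul, Matrix.vecMulVec_mul_vecMulVec, Matrix.trace_vecMulVec,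
      Matrix.vecMulVec_smul, dotProduct_comm]
  · have hsum : ∑ i, hH.eigenvalues i = 1 := by
      have h := hσ.2
      rw [hH.trace_eq_sum_eigenvalues] at h
      simpa using congrArg Complex.re h
    have h := negMulLog_sum_lower_bound hσ.1.eigenvalues_nonneg hsum hmax
    have he : entropy σ = ∑ i, Real.negMulLog (hH.eigenvalues i) := by
      simp [entropy, hH, Real.negMulLog]
    have ht : (σ * (1 - Matrix.vecMulVec ψ (star ψ))).trace.re = 1 - hH.eigenvalues i₀ := by
      rw [Matrix.mul_sub, hσP, Matrix.trace_sub, Matrix.trace_smul, htr, mul_one, hσ.2]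
      simp
    rwa [he, ht]

end Spectral

section Covariance

variable {n ι : Type*} [Fintype n] [DecidableEq n] [Fintype ι]

/-- The covariance `Tr[ρ X† Y] − conj(Tr[ρ X]) Tr[ρ Y]`. -/
def covariance (ρ X Y : Matrix n n ℂ) : ℂ :=
  (ρ * (Xᴴ * Y)).trace - star (ρ * X).trace * (ρ * Y).trace

theorem trace_mul_conjTranspose {ρ : Matrix n n ℂ} (hρ : ρ.IsHermitian) (X : Matrix n n ℂ) :
    (ρ * Xᴴ).trace = star (ρ * X).trace := by
  rw [← Matrix.trace_conjTranspose, Matrix.conjTranspose_mul, hρ, Matrix.trace_mul_comm]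

theorem variance_eq_re_covariance (ρ X : Matrix n n ℂ) :
    variance ρ X = (covariance ρ X X).re := by
  rw [variance, covariance, Complex.sub_re]
  congr 1
  rw [← Complex.normSq_eq_norm_sq]
  simp [Complex.normSq_apply]

theorem covariance_sum {κ : Type*} [Fintype κ] (ρ : Matrix n n ℂ) (X Y : κ → Matrix n n ℂ) :
    covariance ρ (∑ k, X k) (∑ l, Y l) = ∑ k, ∑ l, covariance ρ (X k) (Y l) := by
  simp only [covariance, Matrix.conjTranspose_sum,
    Matrix.trace_sum, star_sum, Finset.sum_mul, Finset.mul_sum, Finset.sum_sub_distrib]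
  exact congrArg₂ _ Finset.sum_comm Finset.sum_comm

theorem star_covariance {ρ : Matrix n n ℂ} (hρ : ρ.IsHermitian) (X Y : Matrix n n ℂ) :
    star (covariance ρ X Y) = covariance ρ Y X := by
  simp only [covariance, star_sub, ← trace_mul_conjTranspose hρ, star_mul',
    Matrix.conjTranspose_mul, Matrix.conjTranspose_conjTranspose]
  ring

variable {ρ : Matrix n n ℂ}

theorem covariance_eq_trace_centered (hρ : IsDensityMatrix ρ) (X Y : Matrix n n ℂ) :
    covariance ρ X Y = (ρ * (Xᴴ * (Y - (ρ * Y).trace • 1))).trace := by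
  rw [covariance, ← trace_mul_conjTranspose hρ.1.1]
  simp [Matrix.mul_sub]
  ring

theorem covariance_eq_trace_centered_centered (hρ : IsDensityMatrix ρ) (X Y : Matrix n n ℂ) :
    covariance ρ X Y =
      (ρ * ((X - (ρ * X).trace • 1)ᴴ * (Y - (ρ * Y).trace • 1))).trace := by
  rw [covariance]
  simp [Matrix.mul_sub, Matrix.sub_mul, trace_mul_conjTranspose hρ.1.1, hρ.2]

theorem sum_re_covariance_le (hρ : IsDensityMatrix ρ) {X : ι → Matrix n n ℂ} {D : ℝ}
    (hX : ((D : ℂ) • (1 : Matrix n n ℂ) - ∑ a, (X a)ᴴ * X a).PosSemidef) :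
    ∑ a, (covariance ρ (X a) (X a)).re ≤ D := by
  have h := sum_trace_mul_le hρ.1 hX 1
  simp only [Matrix.conjTranspose_one, hρ.2, Complex.one_re, mul_one] at h
  refine le_trans (Finset.sum_le_sum fun a _ => ?_) h
  rw [← variance_eq_re_covariance, variance]
  nlinarith [sq_nonneg ‖(ρ * X a).trace‖]

theorem sum_normSq_trace_le (hρ : IsDensityMatrix ρ) {X : ι → Matrix n n ℂ} {D : ℝ}
    (hX : ((D : ℂ) • (1 : Matrix n n ℂ) - ∑ a, (X a)ᴴ * X a).PosSemidef) :
    ∑ a, ‖(ρ * X a).trace‖ ^ 2 ≤ D := by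
  have h := sum_trace_mul_le hρ.1 hX 1
  simp only [Matrix.conjTranspose_one, hρ.2, Complex.one_re, mul_one] at h
  refine le_trans (Finset.sum_le_sum fun a _ => ?_) h
  have h2 : 0 ≤ (covariance ρ (X a) (X a)).re := by
    rw [covariance_eq_trace_centered_centered hρ]
    exact (Complex.le_def.1
      (trace_mul_nonneg hρ.1 (Matrix.posSemidef_conjTranspose_mul_self _))).1
  rw [← variance_eq_re_covariance, variance] at h2
  linarith

theorem norm_sum_covariance_le (hρ : IsDensityMatrix ρ) {X Y : ι → Matrix n n ℂ} {D E : ℝ}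
    (hX : ((D : ℂ) • (1 : Matrix n n ℂ) - ∑ a, (X a)ᴴ * X a).PosSemidef)
    (hY : ((E : ℂ) • (1 : Matrix n n ℂ) - ∑ a, (Y a)ᴴ * Y a).PosSemidef) :
    ‖∑ a, covariance ρ (X a) (Y a)‖ ≤ √D * √E := by
  simp only [covariance_eq_trace_centered_centered hρ]
  refine norm_sum_trace_le_of_le hρ.1 ?_ ?_ <;>
    simp only [← covariance_eq_trace_centered_centered hρ]
  · exact sum_re_covariance_le hρ hX
  · exact sum_re_covariance_le hρ hY

theorem norm_sum_covariance_le_of_projection (hρ : IsDensityMatrix ρ) {X Y : ι → Matrix n n ℂ}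
    {D E : ℝ}
    (hX : ((D : ℂ) • (1 : Matrix n n ℂ) - ∑ a, (X a)ᴴ * X a).PosSemidef)
    (hY : ((E : ℂ) • (1 : Matrix n n ℂ) - ∑ a, (Y a)ᴴ * Y a).PosSemidef)
    {P : Matrix n n ℂ} (hPH : Pᴴ = P) (hPP : P * P = P) (hPY : ∀ a, Commute P (Y a))
    {α : ι → ℂ} (hα : ∀ a, P * X a * P = α a • P) (hαD : ∑ a, ‖α a‖ ^ 2 ≤ D)
    (hoff : ∀ a, (ρ * ((1 - P) * X a * P)).trace = 0) :
    ‖∑ a, covariance ρ (X a) (Y a)‖ ≤ 3 * √(ρ * (1 - P)).trace.re * (√D * √E) := by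
  set Q := 1 - P with hQ
  set ε := (ρ * Q).trace.re with hε
  have hQH : Qᴴ = Q := by simp [hQ, hPH]
  have hQQ : Q * Q = Q := by simp [hQ, mul_sub, sub_mul, hPP]
  have hQY (a : ι) : Commute Q (Y a) := (Commute.one_left _).sub_left (hPY a)
  have hε0 : 0 ≤ ε := by
    have h := trace_mul_nonneg hρ.1 (Matrix.posSemidef_conjTranspose_mul_self Q)
    rw [hQH, hQQ] at h
    exact (Complex.le_def.1 h).1
  have hD0 : 0 ≤ D := (Finset.sum_nonneg fun a _ => sq_nonneg ‖α a‖).trans hαD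
  let Z (a : ι) := Y a - (ρ * Y a).trace • (1 : Matrix n n ℂ)
  have hZ : ∑ a, (ρ * ((Z a)ᴴ * Z a)).trace.re ≤ E := by
    simp only [Z, ← covariance_eq_trace_centered_centered hρ]
    exact sum_re_covariance_le hρ hY
  have hQX : ∑ a, (ρ * ((X a * Q)ᴴ * (X a * Q))).trace.re ≤ D * ε := by
    have h := sum_trace_mul_le hρ.1 hX Q
    rwa [hQH, hQQ] at h
  have hQY' : ∑ a, (ρ * ((Y a * Q)ᴴ * (Y a * Q))).trace.re ≤ E * ε := by
    have h := sum_trace_mul_le hρ.1 hY Q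
    rwa [hQH, hQQ] at h
  have hPX : ∑ a, (ρ * ((X a * P)ᴴ * (X a * P))).trace.re ≤ D := by
    have h := sum_trace_mul_le hρ.1 hX P
    rw [hPH, hPP] at h
    refine h.trans (mul_le_of_le_one_right hD0 ?_)
    have : (ρ * P).trace.re = 1 - ε := by
      simp [hε, hQ, mul_sub, hρ.2]
    linarith
  have hαQ : ∑ a, (ρ * ((α a • Q)ᴴ * (α a • Q))).trace.re ≤ D * ε := by
    have h (a : ι) : (ρ * ((α a • Q)ᴴ * (α a • Q))).trace.re = ‖α a‖ ^ 2 * ε := by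
      have h1 : (ρ * ((α a • Q)ᴴ * (α a • Q))).trace = ((‖α a‖ ^ 2 : ℝ) : ℂ) * (ρ * Q).trace := by
        rw [Matrix.conjTranspose_smul, hQH, smul_mul_smul_comm, hQQ, Matrix.mul_smul,
          Matrix.trace_smul, smul_eq_mul, ← Complex.normSq_eq_norm_sq, Complex.normSq_eq_conj_mul_self]
        rfl
      rw [h1, Complex.re_ofReal_mul]
    simp only [h, ← Finset.sum_mul]
    gcongr
  have hdecomp (a : ι) : X a = X a * Q + Q * X a * P + α a • 1 - α a • Q := by
    have h : α a • (1 : Matrix n n ℂ) - α a • Q = P * X a * P := by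
      rw [hα, hQ, smul_sub, sub_sub_cancel]
    rw [add_sub_assoc, h, hQ]
    noncomm_ring
  have hcov (a : ι) : covariance ρ (X a) (Y a) =
      (ρ * ((X a * Q)ᴴ * Z a)).trace + (ρ * ((X a * P)ᴴ * (Y a * Q))).trace
        - (ρ * ((α a • Q)ᴴ * Z a)).trace := by
    have h0 : (ρ * Z a).trace = 0 := by simp [Z, mul_sub, hρ.2]
    have h1 : (ρ * ((Q * X a * P)ᴴ * Z a)).trace = (ρ * ((X a * P)ᴴ * (Y a * Q))).trace := by
      have h2 : (ρ * (Q * X a * P)ᴴ).trace = 0 := by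
        rw [trace_mul_conjTranspose hρ.1.1, hoff, star_zero]
      have h3 : (Q * X a * P)ᴴ * Y a = (X a * P)ᴴ * (Y a * Q) := by
        rw [← (hQY a).eq, mul_assoc Q, Matrix.conjTranspose_mul, hQH, mul_assoc]
      simp only [Z, mul_sub, Matrix.trace_sub, h3]
      rw [mul_smul_comm, mul_one, mul_smul_comm, Matrix.trace_smul, h2, smul_zero, sub_zero]
    rw [covariance_eq_trace_centered hρ]
    change (ρ * ((X a)ᴴ * Z a)).trace = _
    conv_lhs => rw [hdecomp a]
    rw [← h1]
    simp [add_mul, mul_add, sub_mul, mul_sub, h0]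
  have hsum : ∑ a, covariance ρ (X a) (Y a) =
      ∑ a, (ρ * ((X a * Q)ᴴ * Z a)).trace + ∑ a, (ρ * ((X a * P)ᴴ * (Y a * Q))).trace
        - ∑ a, (ρ * ((α a • Q)ᴴ * Z a)).trace := by
    simp only [hcov, Finset.sum_add_distrib, Finset.sum_sub_distrib]
  have b1 := norm_sum_trace_le_of_le hρ.1 hQX hZ
  have b2 := norm_sum_trace_le_of_le hρ.1 hPX hQY'
  have b3 := norm_sum_trace_le_of_le hρ.1 hαQ hZ
  rw [Real.sqrt_mul' _ hε0] at b1 b2 b3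
  rw [hsum]
  refine (norm_sub_le _ _).trans ?_
  have := norm_add_le (∑ a, (ρ * ((X a * Q)ᴴ * Z a)).trace)
    (∑ a, (ρ * ((X a * P)ᴴ * (Y a * Q))).trace)
  linarith

end Covariance

section MainBound

theorem IsDensityMatrix.reduce {ρ : Matrix (∀ j, d j) (∀ j, d j) ℂ} (hρ : IsDensityMatrix ρ)
    (k : Fin N) : IsDensityMatrix (reduce k ρ) := by
  refine ⟨Matrix.PosSemidef.of_dotProduct_mulVec_nonneg ?_ fun x => ?_, ?_⟩
  · refine Matrix.ext_iff_trace_mul_right.2 fun A => ?_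
    have h : (Paper.reduce k ρ)ᴴ * A = (Aᴴ * Paper.reduce k ρ)ᴴ := by simp
    rw [h, Matrix.trace_conjTranspose, Matrix.trace_mul_comm, ← trace_mul_extendAt,
      ← extendAt_conjTranspose, trace_mul_conjTranspose hρ.1.1, star_star, trace_mul_extendAt]
  · have h : star x ⬝ᵥ Paper.reduce k ρ *ᵥ x =
        (Paper.reduce k ρ * Matrix.vecMulVec x (star x)).trace := by
      rw [Matrix.mul_vecMulVec, Matrix.trace_vecMulVec, dotProduct_comm]
    rw [h, ← trace_mul_extendAt]
    exact trace_mul_nonneg hρ.1 (extendAt_posSemidef k (Matrix.posSemidef_vecMulVec_self_star x))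
  · have h := trace_mul_extendAt k ρ 1
    rw [extendAt_one, mul_one, mul_one, hρ.2] at h
    exact h.symm

variable {A : Type*} [Fintype A] {ρ : Matrix (∀ j, d j) (∀ j, d j) ℂ}

theorem posSemidef_smul_one_sub_extendAt {k : Fin N} {G : A → Matrix (d k) (d k) ℂ} {D : ℝ}
    (hG : ((D : ℂ) • (1 : Matrix (d k) (d k) ℂ) - ∑ a, (G a)ᴴ * G a).PosSemidef) :
    ((D : ℂ) • (1 : Matrix (∀ j, d j) (∀ j, d j) ℂ) -
      ∑ a, (extendAt k (G a))ᴴ * extendAt k (G a)).PosSemidef := by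
  have h := extendAt_posSemidef k hG
  simpa only [extendAt_sub, extendAt_smul, extendAt_one, extendAt_sum, ← extendAt_mul,
    ← extendAt_conjTranspose] using h

theorem entropy_reduce_nonneg [∀ k, Nonempty (d k)] (hρ : IsDensityMatrix ρ) (k : Fin N) :
    0 ≤ entropy (reduce k ρ) := by
  obtain ⟨P, hP, hPP, -, -, h | h⟩ := (hρ.reduce k).exists_projection
  · linarith
  · have hQ : (1 - P).PosSemidef := by
      have : (1 - P)ᴴ * (1 - P) = 1 - P := by
        rw [Matrix.conjTranspose_sub, hP.1.1]
        simp [mul_sub, sub_mul, hPP]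
      exact this ▸ Matrix.posSemidef_conjTranspose_mul_self (1 - P)
    have := (Complex.le_def.1 (trace_mul_nonneg (hρ.reduce k).1 hQ)).1
    rw [Complex.zero_re] at this
    linarith

/-- Distinct factors: the summed covariance is controlled by the entropy of either factor. -/
theorem norm_sum_covariance_extendAt_le [∀ k, Nonempty (d k)] (hρ : IsDensityMatrix ρ)
    {k l : Fin N} (hkl : k ≠ l) {X : A → Matrix (d k) (d k) ℂ} {Y : A → Matrix (d l) (d l) ℂ}
    {D E : ℝ} (hX : ((D : ℂ) • (1 : Matrix (d k) (d k) ℂ) - ∑ a, (X a)ᴴ * X a).PosSemidef)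
    (hY : ((E : ℂ) • (1 : Matrix (d l) (d l) ℂ) - ∑ a, (Y a)ᴴ * Y a).PosSemidef) :
    ‖∑ a, covariance ρ (extendAt k (X a)) (extendAt l (Y a))‖ ≤
      2 * √(entropy (reduce k ρ)) * (√D * √E) := by
  have hX' := posSemidef_smul_one_sub_extendAt hX
  have hY' := posSemidef_smul_one_sub_extendAt hY
  obtain ⟨P, hP, hPP, hPσ, hPX, h | h⟩ := (hρ.reduce k).exists_projection
  · refine (norm_sum_covariance_le hρ hX' hY').trans (le_mul_of_one_le_left (by positivity) ?_)
    have : (1 : ℝ) / 2 ≤ √(entropy (reduce k ρ)) :=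
      Real.le_sqrt_of_sq_le (by linarith)
    linarith
  · have hext : 1 - extendAt k P = extendAt k (1 - P) := by rw [extendAt_sub, extendAt_one]
    have key := norm_sum_covariance_le_of_projection hρ hX' hY' (P := extendAt k P)
      (by rw [extendAt_conjTranspose, hP.1.1]) (by rw [extendAt_mul, hPP])
      (fun a => commute_extendAt hkl P (Y a)) (α := fun a => (P * X a).trace)
      (fun a => by rw [extendAt_mul, extendAt_mul, hPX, extendAt_smul])
      (sum_normSq_trace_le hP hX)
      (fun a => by
        rw [hext, extendAt_mul, extendAt_mul, trace_mul_extendAt, ← mul_assoc,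
          Matrix.trace_mul_comm, ← mul_assoc, ← mul_assoc, hPσ, mul_assoc (reduce k ρ), mul_sub,
          hPP, mul_one, sub_self]
        simp)
    refine key.trans (mul_le_mul_of_nonneg_right ?_ (by positivity))
    rw [hext, trace_mul_extendAt]
    have h9 := Real.sqrt_le_sqrt h
    rw [Real.sqrt_mul (by norm_num), show (9 / 4 : ℝ) = (3 / 2) ^ 2 by norm_num,
      Real.sqrt_sq (by norm_num)] at h9
    linarith

end MainBound

/-- Lemma 1b of the paper. For a finite index set `A` and operators
`G_k^a` on `H_k`, with `G^a = Σ_k (extension of G_k^a to H)` and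
`D_k² = ‖Σ_a (G_k^a)† G_k^a‖_∞`, every density matrix `ρ` on `H` satisfies
`Σ_a Var_ρ(G^a) ≤ ((1/N)·Σ_k D_k²) · (N + 2N²·√((1/N)·Σ_k s_k))`. -/
theorem sum_variance_le_avg_D_sq_mul_entropy_factor
    [∀ k, Nonempty (d k)] (hN : 1 ≤ N)
    {A : Type*} [Fintype A] (G : A → ∀ k, Matrix (d k) (d k) ℂ)
    (ρ : Matrix (∀ j, d j) (∀ j, d j) ℂ) (hρ : IsDensityMatrix ρ) :
    ∑ a, variance ρ (∑ k, extendAt k (G a k)) ≤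
      ((1 / (N : ℝ)) * ∑ k, opNorm (∑ a, (G a k)ᴴ * G a k)) *
        ((N : ℝ) + 2 * (N : ℝ) ^ 2 *
          Real.sqrt ((1 / (N : ℝ)) * ∑ k, entropy (reduce k ρ))) := by
  set D : Fin N → ℝ := fun k => opNorm (∑ a, (G a k)ᴴ * G a k)
  set s : Fin N → ℝ := fun k => entropy (reduce k ρ)
  have hD0 (k : Fin N) : 0 ≤ D k := opNorm_nonneg _
  have hs0 (k : Fin N) : 0 ≤ s k := entropy_reduce_nonneg hρ k
  have hpsd (k : Fin N) :
      ((D k : ℂ) • (1 : Matrix (d k) (d k) ℂ) - ∑ a, (G a k)ᴴ * G a k).PosSemidef :=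
    posSemidef_opNorm_smul_one_sub
      (Matrix.posSemidef_sum _ fun a _ => Matrix.posSemidef_conjTranspose_mul_self (G a k)).1
  let C (k l : Fin N) : ℂ := ∑ a, covariance ρ (extendAt k (G a k)) (extendAt l (G a l))
  have hvar : ∑ a, variance ρ (∑ k, extendAt k (G a k)) = ∑ k, ∑ l, (C k l).re := by
    simp only [variance_eq_re_covariance, covariance_sum, C, Complex.re_sum]
    rw [Finset.sum_comm]
    exact Finset.sum_congr rfl fun k _ => Finset.sum_comm
  have hdiag (k : Fin N) : (C k k).re ≤ D k := by
    simp only [C, Complex.re_sum]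
    exact sum_re_covariance_le hρ (posSemidef_smul_one_sub_extendAt (hpsd k))
  let u (k : Fin N) : ℝ := √(D k) * √√(s k)
  have hu0 (k : Fin N) : 0 ≤ u k := by positivity
  have hoff (k l : Fin N) (hkl : k ≠ l) : (C k l).re ≤ 2 * (u k * u l) := by
    refine (Complex.re_le_norm _).trans ?_
    have h1 : ‖C k l‖ ≤ 2 * √(s k) * (√(D k) * √(D l)) :=
      norm_sum_covariance_extendAt_le hρ hkl (hpsd k) (hpsd l)
    have h2 : ‖C k l‖ ≤ 2 * √(s l) * (√(D l) * √(D k)) := by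
      have h : ‖C l k‖ ≤ _ := norm_sum_covariance_extendAt_le hρ hkl.symm (hpsd l) (hpsd k)
      have hstar : C k l = star (C l k) := by
        simp only [C, star_sum, star_covariance hρ.1.1]
      rwa [hstar, norm_star]
    refine le_of_sq_le_sq ?_ (by positivity)
    calc ‖C k l‖ ^ 2 = ‖C k l‖ * ‖C k l‖ := sq _
      _ ≤ (2 * √(s k) * (√(D k) * √(D l))) * (2 * √(s l) * (√(D l) * √(D k))) :=
        mul_le_mul h1 h2 (norm_nonneg _) (by positivity)
      _ = (2 * (u k * u l)) ^ 2 := by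
        have e (i : Fin N) : √√(s i) ^ 2 = √(s i) := Real.sq_sqrt (Real.sqrt_nonneg _)
        simp only [u, mul_pow, e]
        ring
  have hentry (k l : Fin N) : (C k l).re ≤ (if k = l then D k else 0) + 2 * (u k * u l) := by
    split_ifs with h
    · subst h
      have := hdiag k
      nlinarith [hu0 k]
    · linarith [hoff k l h]
  have husq : (∑ k, u k) ^ 2 ≤ (∑ k, D k) * ∑ k, √(s k) := by
    refine (Finset.sum_mul_sq_le_sq_mul_sq _ _ _).trans_eq ?_
    congr 1
    · exact Finset.sum_congr rfl fun k _ => Real.sq_sqrt (hD0 k)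
    · exact Finset.sum_congr rfl fun k _ => Real.sq_sqrt (Real.sqrt_nonneg _)
  have hNpos : (0 : ℝ) < N := by exact_mod_cast hN
  have hsqrt : ∑ k, √(s k) ≤ N * √((1 / (N : ℝ)) * ∑ k, s k) := by
    have hsq : (∑ k, √(s k)) ^ 2 ≤ N * ∑ k, s k := by
      have h := sq_sum_le_card_mul_sum_sq (s := Finset.univ) (f := fun k => √(s k))
      simpa [Real.sq_sqrt (hs0 _)] using h
    have h0 : 0 ≤ ∑ k, s k := Finset.sum_nonneg fun k _ => hs0 k
    refine le_of_sq_le_sq ?_ (by positivity)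
    rw [mul_pow, Real.sq_sqrt (by positivity)]
    refine hsq.trans_eq ?_
    field_simp
  calc ∑ a, variance ρ (∑ k, extendAt k (G a k)) = ∑ k, ∑ l, (C k l).re := hvar
    _ ≤ ∑ k, ∑ l, ((if k = l then D k else 0) + 2 * (u k * u l)) :=
      Finset.sum_le_sum fun k _ => Finset.sum_le_sum fun l _ => hentry k l
    _ = ∑ k, D k + 2 * (∑ k, u k) ^ 2 := by
      simp only [Finset.sum_add_distrib, ← Finset.mul_sum, sq, Finset.sum_mul_sum]
      simp
    _ ≤ ∑ k, D k + 2 * ((∑ k, D k) * (N * √((1 / (N : ℝ)) * ∑ k, s k))) := by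
      have hDsum : 0 ≤ ∑ k, D k := Finset.sum_nonneg fun k _ => hD0 k
      have := mul_le_mul_of_nonneg_left hsqrt hDsum
      linarith
    _ = _ := by
      field_simp

end Paper
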